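/- There exists T > 0, depending only on 𝒥, ℛ, (ā_r)_{r∈ℛ}, and C, such that every fluid model solution x with ‖x(0)‖₁ = 1 satisfies x_{jr}(t) = 0 for all (j,r) ∈ E and all t ≥ T. (Fluid stability of the Proportional Scheduler in multihop networks with fixed routing.) -/

import Mathlib

open MeasureTheory
open scoped Classical

/-- Per-link queue sizes `q j = ∑_{r ∋ j} x j r`, where route `r` consists of
the links `link r 0, …, link r (K r - 1)`. -/
noncomputable def qOf {J R : Type} [Fintype R] (K : R → ℕ) (link : R → ℕ → J)
    (x : J → R → ℝ) (j : J) : ℝ :=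
  ∑ r ∈ Finset.univ.filter (fun r => ∃ k < K r, link r k = j), x j r

open Filter Set Topology

/-!
Regard the pairs of a route and a position on it as classes. By Gibbs' inequality, sharing the
proportionally fair link rates in proportion to the queues makes the rates `y` of the classes, in
units of the arrival rates of their routes, proportionally fair for the class queues `x` over an
induced rate region. The optimal value `V x = max ∑ x log y` of this problem is the Lyapunov
function: by the envelope theorem its drift along a solution is `∑ x' log y`, and the part of a
route with arrival rate `a` and relative flows `1 = y₀, y₁, …, yₙ` telescopes to at most
`-a ∑ (√yₖ - √yₖ₊₁)²`. As the arrival rates are interior to the capacity region, some constant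
vector `ρ > 1` belongs to the induced region; when `x ≠ 0` the first-order optimality condition then
gives a class with `y ≥ ρ`, so the drift is at most a negative constant. Near an empty class the
rates are not controlled and `V ∘ x` need not be Lipschitz, so the drift is only estimated from the
right, outside a null set.
-/

theorem tendsto_slope_integral_atTop {G : ℝ → ENNReal} (hG : LowerSemicontinuous G)
    (hfin : ∫⁻ x, G x ≠ ⊤) {t : ℝ} (ht : G t = ⊤) (a : ℝ) :
    Tendsto (slope (fun t => ∫ x in a..t, (G x).toReal) t) (𝓝[>] t) atTop := by
  have hint : Integrable fun x => (G x).toReal :=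
    integrable_toReal_of_lintegral_ne_top hG.measurable.aemeasurable hfin
  refine tendsto_atTop.2 fun M => ?_
  obtain ⟨v, htv, hv⟩ := mem_nhdsGE_iff_exists_Ico_subset.1 (mem_nhdsWithin_of_mem_nhds
    (hG t (ENNReal.ofReal M) (by simp [ht])))
  filter_upwards [Ioo_mem_nhdsGT htv] with u hu
  rw [slope_def_field, le_div_iff₀ (sub_pos.2 hu.1),
    intervalIntegral.integral_interval_sub_left hint.intervalIntegrable hint.intervalIntegrable]
  calc M * (u - t) = ∫ _ in t..u, M := by simp [mul_comm]
    _ ≤ ∫ x in t..u, (G x).toReal := by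
        refine intervalIntegral.integral_mono_ae_restrict hu.1.le (by simp)
          hint.intervalIntegrable ?_
        filter_upwards [ae_restrict_of_ae (ae_lt_top hG.measurable hfin),
          ae_restrict_mem measurableSet_Icc] with x hx hxI
        exact (ENNReal.ofReal_le_iff_le_toReal hx.ne).1 (hv ⟨hxI.1, hxI.2.trans_lt hu.2⟩).le

theorem exists_monotone_tendsto_slope_atTop {Z : Set ℝ} (hZ : volume Z = 0) {ε : ℝ} (hε : 0 < ε) :
    ∃ ψ : ℝ → ℝ, Continuous ψ ∧ Monotone ψ ∧ (∀ a b, ψ b - ψ a ≤ ε) ∧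
      ∀ t ∈ Z, Tendsto (slope ψ t) (𝓝[>] t) atTop := by
  have hnull : volume (toMeasurable volume Z) = 0 := by rw [measure_toMeasurable, hZ]
  obtain ⟨G, hG, hlsc, hGε⟩ := exists_le_lowerSemicontinuous_lintegral_ge volume
    ((toMeasurable volume Z).indicator fun _ => (⊤ : ENNReal))
    (measurable_const.indicator (measurableSet_toMeasurable _ _))
    (ENNReal.ofReal_pos.2 hε).ne'
  rw [lintegral_indicator_const (measurableSet_toMeasurable _ _), hnull, mul_zero, zero_add] at hGε
  have hfin : ∫⁻ x, G x ≠ ⊤ := ne_top_of_le_ne_top ENNReal.ofReal_ne_top hGε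
  have hint : Integrable fun x => (G x).toReal :=
    integrable_toReal_of_lintegral_ne_top hlsc.measurable.aemeasurable hfin
  have hsub (a b : ℝ) : (∫ x in 0..b, (G x).toReal) - ∫ x in 0..a, (G x).toReal =
      ∫ x in a..b, (G x).toReal :=
    intervalIntegral.integral_interval_sub_left hint.intervalIntegrable hint.intervalIntegrable
  have hmono : Monotone fun t => ∫ x in 0..t, (G x).toReal := fun a b hab => by
    rw [← sub_nonneg, hsub]
    exact intervalIntegral.integral_nonneg hab fun _ _ => ENNReal.toReal_nonneg
  have hle (a b : ℝ) : (∫ x in 0..b, (G x).toReal) - ∫ x in 0..a, (G x).toReal ≤ ε := by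
    rcases le_total a b with hab | hba
    · calc _ = ∫ x in Ioc a b, (G x).toReal := by
            rw [hsub, intervalIntegral.integral_of_le hab]
        _ ≤ ∫ x, (G x).toReal :=
            setIntegral_le_integral hint (Eventually.of_forall fun _ => ENNReal.toReal_nonneg)
        _ ≤ ε := by
            rw [integral_toReal hlsc.measurable.aemeasurable (ae_lt_top hlsc.measurable hfin)]
            exact ENNReal.toReal_le_of_le_ofReal hε.le hGε
    · exact (sub_nonpos.2 (hmono hba)).trans hε.le
  refine ⟨_, hint.continuous_primitive 0, hmono, hle, fun t ht =>
    tendsto_slope_integral_atTop hlsc hfin (top_le_iff.1 ?_) 0⟩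
  simpa [indicator_of_mem (subset_toMeasurable _ _ ht)] using hG t

theorem sub_le_mul_sub_of_ae_slope_le {g : ℝ → ℝ} {a b c : ℝ} (hab : a ≤ b)
    (hg : ContinuousOn g (Icc a b))
    (hfin : ∀ t ∈ Ico a b, ∃ m, ∀ᶠ u in 𝓝[>] t, slope g t u ≤ m)
    (hae : ∀ᵐ t, t ∈ Ico a b → ∀ m > c, ∀ᶠ u in 𝓝[>] t, slope g t u ≤ m) :
    g b - g a ≤ c * (b - a) := by
  refine le_of_forall_pos_le_add fun ε hε => ?_
  obtain ⟨ψ, hψ, hmono, hψε, hslope⟩ := exists_monotone_tendsto_slope_atTop hae hε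
  have hsub (t u : ℝ) : slope (fun v => g v - ψ v) t u = slope g t u - slope ψ t u := by
    simp only [slope_def_field]; ring
  have hbound : ∀ t ∈ Ico a b, ∀ m, c < m → ∃ᶠ u in 𝓝[>] t, slope (fun v => g v - ψ v) t u < m := by
    intro t ht m hm
    refine Eventually.frequently ?_
    by_cases hgood : ∀ m > c, ∀ᶠ u in 𝓝[>] t, slope g t u ≤ m
    · obtain ⟨m', hcm', hm'⟩ := exists_between hm
      filter_upwards [hgood m' hcm'] with u hu
      rw [hsub]
      have := hmono.monotoneOn univ |>.slope_nonneg (mem_univ t) (mem_univ u)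
      linarith
    · obtain ⟨M, hM⟩ := hfin t ht
      filter_upwards [hM, (hslope t fun h => hgood (h ht)).eventually_gt_atTop (M - m)]
        with u hu hψu
      rw [hsub]
      linarith
  have hline (t : ℝ) : HasDerivAt (fun t => g a - ψ a + c * (t - a)) c t := by
    simpa using (((hasDerivAt_id t).sub_const a).const_mul c).const_add (g a - ψ a)
  have hgb := image_le_of_liminf_slope_right_le_deriv_boundary (hg.sub hψ.continuousOn) (by simp)
    (fun t _ => (hline t).continuousAt.continuousWithinAt)
    (fun t _ => (hline t).hasDerivWithinAt) hbound (right_mem_Icc.2 hab)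
  simp only [Pi.sub_apply] at hgb
  linarith [hψε a b]

theorem exists_forall_apply_le_of_isCompact {ι : Type*} [Finite ι] {C : Set (ι → ℝ)}
    (hC : IsCompact C) : ∃ B, ∀ s ∈ C, ∀ i, s i ≤ B := by
  have := Fintype.ofFinite ι
  obtain ⟨B, hB⟩ := hC.isBounded.exists_norm_le
  exact ⟨B, fun s hs i => (le_abs_self _).trans ((norm_le_pi_norm s i).trans (hB s hs))⟩

section ProportionalFairness

variable {ι : Type*} [Fintype ι] {C : Set (ι → ℝ)} {q q' s s' v : ι → ℝ}

/-- `s` is a proportionally fair allocation in `C` for the queue sizes `q`: it maximizes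
`∑ i, q i * log (s i)`. Since `Real.log 0 = 0`, positivity of the rates of nonempty queues is
required explicitly, both of `s` and of its competitors. -/
structure IsPropFair (C : Set (ι → ℝ)) (q s : ι → ℝ) : Prop where
  mem : s ∈ C
  pos : ∀ i, 0 < q i → 0 < s i
  le : ∀ s' ∈ C, (∀ i, 0 < q i → 0 < s' i) →
    ∑ i, q i * Real.log (s' i) ≤ ∑ i, q i * Real.log (s i)

theorem isPropFair_iff_sum_filter_pos (hq : 0 ≤ q) :
    IsPropFair C q s ↔ s ∈ C ∧ (∀ i, 0 < q i → 0 < s i) ∧ ∀ s' ∈ C, (∀ i, 0 < q i → 0 < s' i) →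
      ∑ i with 0 < q i, q i * Real.log (s' i) ≤ ∑ i with 0 < q i, q i * Real.log (s i) := by
  have hsum (s : ι → ℝ) :
      ∑ i with 0 < q i, q i * Real.log (s i) = ∑ i, q i * Real.log (s i) :=
    Finset.sum_filter_of_ne fun i _ h => (hq i).lt_of_ne' (left_ne_zero_of_mul h)
  simp only [hsum]
  exact ⟨fun h => ⟨h.mem, h.pos, h.le⟩, fun h => ⟨h.1, h.2.1, h.2.2⟩⟩

/-- A set of rate vectors on which proportional fairness is well posed. -/
structure IsRateRegion (C : Set (ι → ℝ)) : Prop where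
  isCompact : IsCompact C
  convex : Convex ℝ C
  nonneg : ∀ s ∈ C, 0 ≤ s
  exists_pos : ∃ e ∈ C, ∀ i, 0 < e i

theorem hasDerivAt_sum_log_segment (hq : 0 ≤ q) (hs : ∀ i, 0 < q i → 0 < s i) (v : ι → ℝ) :
    HasDerivAt (fun θ : ℝ => ∑ i, q i * Real.log (s i + θ * (v i - s i)))
      (∑ i, q i * ((v i - s i) / s i)) 0 := by
  refine HasDerivAt.fun_sum fun i _ => ?_
  rcases (hq i).eq_or_lt with hqi | hqi
  · simpa [← hqi] using hasDerivAt_const (0 : ℝ) (0 : ℝ)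
  · have hline : HasDerivAt (fun θ : ℝ => s i + θ * (v i - s i)) (v i - s i) 0 := by
      simpa using ((hasDerivAt_id (0 : ℝ)).mul_const (v i - s i)).const_add (s i)
    simpa using (hline.log (by simpa using (hs i hqi).ne')).const_mul (q i)

theorem IsPropFair.sum_mul_div_le (h : IsPropFair C q s) (hC : Convex ℝ C) (hq : 0 ≤ q)
    (hv : v ∈ C) : ∑ i, q i * (v i / s i) ≤ ∑ i, q i := by
  have hderiv := hasDerivAt_sum_log_segment hq h.pos v
  have hpos : ∀ᶠ θ in 𝓝[>] (0 : ℝ), ∀ i, 0 < q i → 0 < s i + θ * (v i - s i) := by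
    refine eventually_all.2 fun i => eventually_imp_distrib_left.2 fun hqi => ?_
    have hcont : ContinuousAt (fun θ : ℝ => s i + θ * (v i - s i)) 0 := by fun_prop
    exact (hcont.eventually_const_lt (by simpa using h.pos i hqi)).filter_mono nhdsWithin_le_nhds
  have hslope : ∑ i, q i * ((v i - s i) / s i) ≤ 0 := by
    refine le_of_tendsto ((hasDerivWithinAt_iff_tendsto_slope' (notMem_Ioi.2 le_rfl)).1
      (hderiv.hasDerivWithinAt (s := Ioi 0))) ?_
    filter_upwards [hpos, Ioo_mem_nhdsGT zero_lt_one] with θ hθpos hθ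
    have hle := h.le _ (hC.add_smul_sub_mem h.mem hv ⟨hθ.1.le, hθ.2.le⟩) (by simpa using hθpos)
    rw [slope_def_field]
    exact div_nonpos_of_nonpos_of_nonneg (by simpa using hle) (by simpa using hθ.1.le)
  have hterm (i : ι) : q i * ((v i - s i) / s i) = q i * (v i / s i) - q i := by
    rcases (hq i).eq_or_lt with hqi | hqi
    · simp [← hqi]
    · rw [sub_div, div_self (h.pos i hqi).ne', mul_sub_one]
  simpa [hterm, sub_nonpos] using hslope

theorem IsPropFair.exists_le (h : IsPropFair C q s) (hC : Convex ℝ C) (hq : 0 ≤ q) (hq0 : q ≠ 0)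
    {b : ℝ} (hb : (fun _ => b) ∈ C) : ∃ i, b ≤ s i := by
  by_contra! hlt
  have hratio (i : ι) (hqi : 0 < q i) : q i < q i * (b / s i) :=
    lt_mul_of_one_lt_right hqi ((one_lt_div (h.pos i hqi)).2 (hlt i))
  obtain ⟨j, hj⟩ := Function.ne_iff.1 hq0
  refine (h.sum_mul_div_le hC hq hb).not_gt (Finset.sum_lt_sum (fun i _ => ?_)
    ⟨j, Finset.mem_univ j, hratio j ((hq j).lt_of_ne' hj)⟩)
  rcases (hq i).eq_or_lt with hqi | hqi
  · simp [← hqi]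
  · exact (hratio i hqi).le

theorem prod_rpow_pos (hs : ∀ i, 0 < q i → 0 < s i) (hq : 0 ≤ q) : 0 < ∏ i, s i ^ q i := by
  refine Finset.prod_pos fun i _ => ?_
  rcases (hq i).eq_or_lt with hqi | hqi
  · simp [← hqi]
  · exact Real.rpow_pos_of_pos (hs i hqi) _

theorem log_prod_rpow (hs : ∀ i, 0 < q i → 0 < s i) (hq : 0 ≤ q) :
    Real.log (∏ i, s i ^ q i) = ∑ i, q i * Real.log (s i) := by
  rw [Real.log_prod fun i _ => (Finset.prod_ne_zero_iff.1 (prod_rpow_pos hs hq).ne' i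
    (Finset.mem_univ i))]
  refine Finset.sum_congr rfl fun i _ => ?_
  rcases (hq i).eq_or_lt with hqi | hqi
  · simp [← hqi]
  · exact Real.log_rpow (hs i hqi) _

theorem IsRateRegion.exists_isPropFair (hC : IsRateRegion C) (hq : 0 ≤ q) :
    ∃ s, IsPropFair C q s := by
  obtain ⟨e, he, hepos⟩ := hC.exists_pos
  have hcont : Continuous fun s : ι → ℝ => ∏ i, s i ^ q i :=
    continuous_finsetProd _ fun i _ => (continuous_apply i).rpow_const fun _ => Or.inr (hq i)
  obtain ⟨s, hs, hmax⟩ := hC.isCompact.exists_isMaxOn ⟨e, he⟩ hcont.continuousOn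
  have hprod : 0 < ∏ i, s i ^ q i := (prod_rpow_pos (fun i _ => hepos i) hq).trans_le (hmax he)
  have hpos (i : ι) (hqi : 0 < q i) : 0 < s i := by
    refine (hC.nonneg s hs i).lt_of_ne' fun hsi => ?_
    refine Finset.prod_ne_zero_iff.1 hprod.ne' i (Finset.mem_univ i) ?_
    rw [hsi, Pi.zero_apply, Real.zero_rpow hqi.ne']
  refine ⟨s, hs, hpos, fun s' hs' hpos' => ?_⟩
  rw [← log_prod_rpow hpos hq, ← log_prod_rpow hpos' hq]
  exact Real.log_le_log (prod_rpow_pos hpos' hq) (hmax hs')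

/-- The optimal value of the proportionally fair program, the Lyapunov function of the proof. -/
noncomputable def fairValue (C : Set (ι → ℝ)) (q : ι → ℝ) : ℝ :=
  sSup ((fun s => ∑ i, q i * Real.log (s i)) '' {s ∈ C | ∀ i, 0 < q i → 0 < s i})

theorem IsPropFair.fairValue_eq (h : IsPropFair C q s) :
    fairValue C q = ∑ i, q i * Real.log (s i) :=
  IsGreatest.csSup_eq ⟨mem_image_of_mem _ ⟨h.mem, h.pos⟩,
    forall_mem_image.2 fun s' hs' => h.le s' hs'.1 hs'.2⟩

theorem IsRateRegion.le_fairValue (hC : IsRateRegion C) (hq : 0 ≤ q) (hs : s ∈ C)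
    (hpos : ∀ i, 0 < q i → 0 < s i) : ∑ i, q i * Real.log (s i) ≤ fairValue C q := by
  obtain ⟨s', hs'⟩ := hC.exists_isPropFair hq
  exact hs'.fairValue_eq ▸ hs'.le s hs hpos

theorem IsRateRegion.fairValue_le (hC : IsRateRegion C) (hq : 0 ≤ q) {B : ℝ}
    (hB : ∀ s ∈ C, ∀ i, s i ≤ B) : fairValue C q ≤ Real.log B * ∑ i, q i := by
  obtain ⟨s, hs⟩ := hC.exists_isPropFair hq
  rw [hs.fairValue_eq, Finset.mul_sum]
  refine Finset.sum_le_sum fun i _ => ?_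
  rcases (hq i).eq_or_lt with hqi | hqi
  · simp [← hqi]
  · rw [mul_comm]
    exact mul_le_mul_of_nonneg_right (Real.log_le_log (hs.pos i hqi) (hB s hs.mem i)) (hq i)

theorem IsRateRegion.eq_zero_of_fairValue_nonpos (hC : IsRateRegion C) (hq : 0 ≤ q) {b : ℝ}
    (hb : 1 < b) (hbC : (fun _ => b) ∈ C) (h : fairValue C q ≤ 0) : q = 0 := by
  have hle := (hC.le_fairValue hq hbC fun _ _ => zero_lt_one.trans hb).trans h
  rw [← Finset.sum_mul] at hle
  exact (Fintype.sum_eq_zero_iff_of_nonneg hq).1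
    ((nonpos_of_mul_nonpos_left hle (Real.log_pos hb)).antisymm (Fintype.sum_nonneg hq))

/-- The gradient of `fairValue C` at `q`, where `s` is proportionally fair for `q`. The rate of an
empty queue is not determined by fairness; it is replaced by an upper bound `B` of all rates. -/
noncomputable def logPrice (B : ℝ) (q s : ι → ℝ) (i : ι) : ℝ :=
  if 0 < q i then Real.log (s i) else Real.log B

theorem mul_log_le_mul_sub_add_sq_div {x y z : ℝ} (hx : 0 < x) (hy : 0 ≤ y) (hz : 0 ≤ z)
    (hyz : 0 < y → 0 < z) : y * Real.log z ≤ x * z - x + (y - x) ^ 2 / x := by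
  have hsq : (y - x) ^ 2 / x = y * (y / x) - 2 * y + x := by field_simp; ring
  rcases hy.eq_or_lt with rfl | hy
  · rw [hsq]
    simpa using mul_nonneg hx.le hz
  · have hz := hyz hy
    have hlog : Real.log z = Real.log (x * z / y) + Real.log (y / x) := by
      rw [← Real.log_mul (by positivity) (by positivity)]
      congr 1
      field_simp
    have h₁ := Real.log_le_sub_one_of_pos (show 0 < x * z / y by positivity)
    have h₂ := Real.log_le_sub_one_of_pos (show 0 < y / x by positivity)
    calc y * Real.log z ≤ y * (x * z / y - 1 + (y / x - 1)) := by rw [hlog]; gcongr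
      _ = x * z - x + (y - x) ^ 2 / x := by rw [hsq]; field_simp; ring

/- Where `q i = 0`, the quadratic error term vanishes because `a / 0 = 0`. -/
theorem IsPropFair.fairValue_sub_le (h : IsPropFair C q s) (hC : IsRateRegion C) (hq : 0 ≤ q)
    (hq' : 0 ≤ q') {B : ℝ} (hB : ∀ s ∈ C, ∀ i, s i ≤ B) :
    fairValue C q' - fairValue C q ≤
      ∑ i, ((q' i - q i) * logPrice B q s i + (q' i - q i) ^ 2 / q i) := by
  obtain ⟨s', hs'⟩ := hC.exists_isPropFair hq'
  have hterm (i : ι) : q' i * Real.log (s' i) - q i * Real.log (s i) ≤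
      (q' i - q i) * logPrice B q s i + (q' i - q i) ^ 2 / q i + (q i * (s' i / s i) - q i) := by
    rcases (hq i).eq_or_lt with hqi | hqi
    · rw [logPrice, if_neg (show ¬ 0 < q i from hqi.not_lt), ← hqi]
      rcases (hq' i).eq_or_lt with hq'i | hq'i
      · simp [← hq'i]
      · simpa using mul_le_mul_of_nonneg_left
          (Real.log_le_log (hs'.pos i hq'i) (hB s' hs'.mem i)) (hq' i)
    · have hsi := h.pos i hqi
      have hratio := mul_log_le_mul_sub_add_sq_div hqi (hq' i)
        (div_nonneg (hC.nonneg s' hs'.mem i) hsi.le) fun hq'i => div_pos (hs'.pos i hq'i) hsi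
      have hlog : q' i * Real.log (s' i / s i) =
          q' i * Real.log (s' i) - q' i * Real.log (s i) := by
        rcases (hq' i).eq_or_lt with hq'i | hq'i
        · simp [← hq'i]
        · rw [Real.log_div (hs'.pos i hq'i).ne' hsi.ne', mul_sub]
      rw [logPrice, if_pos (show 0 < q i from hqi)]
      linarith
  have hfoc := h.sum_mul_div_le hC.convex hq hs'.mem
  have hsum := Finset.sum_le_sum fun i (_ : i ∈ Finset.univ) => hterm i
  rw [Finset.sum_sub_distrib, Finset.sum_add_distrib (g := fun i => q i * (s' i / s i) - q i),
    Finset.sum_sub_distrib (f := fun i => q i * (s' i / s i))] at hsum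
  rw [hs'.fairValue_eq, h.fairValue_eq]
  linarith

theorem IsRateRegion.eventually_lt_fairValue (hC : IsRateRegion C) (hq : 0 ≤ q) {y : ℝ}
    (hy : y < fairValue C q) : ∀ᶠ q' in 𝓝[Ici 0] q, y < fairValue C q' := by
  obtain ⟨s, hs⟩ := hC.exists_isPropFair hq
  obtain ⟨e, he, hepos⟩ := hC.exists_pos
  have hnear : ∀ᶠ θ in 𝓝[>] (0 : ℝ), y < ∑ i, q i * Real.log (s i + θ * (e i - s i)) :=
    ((hasDerivAt_sum_log_segment hq hs.pos e).continuousAt.eventually_const_lt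
      (by simpa [hs.fairValue_eq] using hy)).filter_mono nhdsWithin_le_nhds
  obtain ⟨θ, hθy, hθ₀, hθ₁⟩ := (hnear.and (Ioo_mem_nhdsGT zero_lt_one)).exists
  have hmem := hC.convex.add_smul_sub_mem hs.mem he ⟨hθ₀.le, hθ₁.le⟩
  have hpos (i : ι) : 0 < (s + θ • (e - s)) i := by
    have h₁ : 0 ≤ (1 - θ) * s i := mul_nonneg (sub_nonneg.2 hθ₁.le) (hC.nonneg s hs.mem i)
    have h₂ : 0 < θ * e i := mul_pos hθ₀ (hepos i)
    simp only [Pi.add_apply, Pi.smul_apply, Pi.sub_apply, smul_eq_mul]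
    linarith
  have hcont : Continuous fun q' : ι → ℝ => ∑ i, q' i * Real.log ((s + θ • (e - s)) i) := by
    fun_prop
  filter_upwards [self_mem_nhdsWithin, (hcont.continuousAt.eventually_const_lt
    (by simpa using hθy)).filter_mono nhdsWithin_le_nhds] with q' hq' hlt
  exact hlt.trans_le (hC.le_fairValue hq' hmem fun i _ => hpos i)

theorem IsRateRegion.continuousOn_fairValue (hC : IsRateRegion C) :
    ContinuousOn (fairValue C) (Ici 0) := by
  intro q hq
  obtain ⟨s, hs⟩ := hC.exists_isPropFair hq
  obtain ⟨B, hB⟩ := exists_forall_apply_le_of_isCompact hC.isCompact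
  have hcont : Continuous fun q' : ι → ℝ => fairValue C q +
      ∑ i, ((q' i - q i) * logPrice B q s i + (q' i - q i) ^ 2 / q i) := by
    fun_prop
  refine tendsto_order.2 ⟨fun y hy => hC.eventually_lt_fairValue hq hy, fun y hy => ?_⟩
  filter_upwards [self_mem_nhdsWithin, (hcont.continuousAt.eventually_lt_const
    (by simpa using hy)).filter_mono nhdsWithin_le_nhds] with q' hq' hlt
  linarith [hs.fairValue_sub_le hC hq hq' hB]

end ProportionalFairness

section FairValueAlongPaths

variable {ι : Type*} [Fintype ι] {C : Set (ι → ℝ)} {X : ℝ → ι → ℝ} {s d : ι → ℝ} {a b c t : ℝ}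

theorem IsPropFair.slope_fairValue_le (h : IsPropFair C (X t) s) (hC : IsRateRegion C) {B u : ℝ}
    (hB : ∀ s ∈ C, ∀ i, s i ≤ B) (ht : 0 ≤ X t) (hu : 0 ≤ X u) (htu : t < u) :
    slope (fun τ => fairValue C (X τ)) t u ≤ ∑ i, (slope (fun τ => X τ i) t u *
      logPrice B (X t) s i + slope (fun τ => X τ i) t u * ((X u i - X t i) / X t i)) := by
  rw [slope_def_field, div_le_iff₀ (sub_pos.2 htu), Finset.sum_mul]
  refine (h.fairValue_sub_le hC ht hu hB).trans_eq (Finset.sum_congr rfl fun i _ => ?_)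
  have := (sub_pos.2 htu).ne'
  rw [slope_def_field]
  field_simp

theorem IsPropFair.eventually_slope_fairValue_le (h : IsPropFair C (X t) s) (hC : IsRateRegion C)
    (hX : ∀ᶠ u in 𝓝 t, 0 ≤ X u) (hd : ∀ i, HasDerivAt (fun τ => X τ i) (d i) t)
    (hdrift : ∑ i, d i * Real.log (s i) < c) :
    ∀ᶠ u in 𝓝[>] t, slope (fun τ => fairValue C (X τ)) t u ≤ c := by
  obtain ⟨B, hB⟩ := exists_forall_apply_le_of_isCompact hC.isCompact
  have hzero (i : ι) (hi : X t i = 0) : d i = 0 :=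
    IsLocalMin.hasDerivAt_eq_zero (hX.mono fun u hu => hi.trans_le (hu i)) (hd i)
  have hsum : ∑ i, (d i * logPrice B (X t) s i + d i * ((X t i - X t i) / X t i)) =
      ∑ i, d i * Real.log (s i) := by
    refine Finset.sum_congr rfl fun i _ => ?_
    rcases (hX.self_of_nhds i).eq_or_lt with hi | hi
    · simp [hzero i hi.symm]
    · simp [logPrice, show 0 < X t i from hi]
  have hlim : Tendsto (fun u => ∑ i, (slope (fun τ => X τ i) t u * logPrice B (X t) s i +
      slope (fun τ => X τ i) t u * ((X u i - X t i) / X t i))) (𝓝[>] t)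
      (𝓝 (∑ i, d i * Real.log (s i))) := by
    rw [← hsum]
    refine tendsto_finsetSum _ fun i _ => ?_
    have hslope : Tendsto (slope (fun τ => X τ i) t) (𝓝[>] t) (𝓝 (d i)) :=
      (hasDerivWithinAt_iff_tendsto_slope' (notMem_Ioi.2 le_rfl)).1 (hd i).hasDerivWithinAt
    have hcont : Tendsto (fun u => X u i) (𝓝[>] t) (𝓝 (X t i)) :=
      (hd i).continuousAt.tendsto.mono_left nhdsWithin_le_nhds
    exact (hslope.mul_const _).add (hslope.mul ((hcont.sub_const _).div_const _))
  filter_upwards [hlim.eventually_lt_const hdrift, hX.filter_mono nhdsWithin_le_nhds,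
    self_mem_nhdsWithin] with u hu hXu htu
  exact (h.slope_fairValue_le hC hB hX.self_of_nhds hXu htu).trans hu.le

theorem IsRateRegion.exists_slope_fairValue_le (hC : IsRateRegion C) {L : NNReal}
    (hX : ∀ u ∈ Icc a b, 0 ≤ X u) (hLip : ∀ i, LipschitzOnWith L (fun τ => X τ i) (Icc a b))
    (ht : t ∈ Ico a b) :
    ∃ m, ∀ᶠ u in 𝓝[>] t, slope (fun τ => fairValue C (X τ)) t u ≤ m := by
  have htI := Ico_subset_Icc_self ht
  obtain ⟨s, hs⟩ := hC.exists_isPropFair (hX t htI)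
  obtain ⟨B, hB⟩ := exists_forall_apply_le_of_isCompact hC.isCompact
  refine ⟨∑ i, (L * |logPrice B (X t) s i| + L * (L * (b - a) / X t i)), ?_⟩
  filter_upwards [Ioo_mem_nhdsGT ht.2] with u hu
  have huI : u ∈ Icc a b := ⟨ht.1.trans hu.1.le, hu.2.le⟩
  refine (hs.slope_fairValue_le hC hB (hX t htI) (hX u huI) hu.1).trans
    (Finset.sum_le_sum fun i _ => ?_)
  have hinc : |X u i - X t i| ≤ L * (u - t) := by
    simpa [Real.dist_eq, abs_of_pos (sub_pos.2 hu.1)] using (hLip i).dist_le_mul u huI t htI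
  have hslope : |slope (fun τ => X τ i) t u| ≤ L := by
    rwa [slope_def_field, abs_div, abs_of_pos (sub_pos.2 hu.1), div_le_iff₀ (sub_pos.2 hu.1)]
  have hXt : 0 ≤ X t i := hX t htI i
  refine add_le_add ?_ ?_ <;> refine (le_abs_self _).trans ?_ <;> rw [abs_mul]
  · gcongr
  · rw [abs_div, abs_of_nonneg hXt]
    have := hinc.trans (mul_le_mul_of_nonneg_left (show u - t ≤ b - a by linarith [ht.1, hu.2]) L.2)
    gcongr

theorem IsRateRegion.fairValue_sub_le_of_ae (hC : IsRateRegion C) {L : NNReal} (hab : a ≤ b)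
    (hX : ∀ t ∈ Icc a b, 0 ≤ X t) (hLip : ∀ i, LipschitzOnWith L (fun τ => X τ i) (Icc a b))
    (hae : ∀ᵐ t, t ∈ Ioo a b → ∃ s d : ι → ℝ, IsPropFair C (X t) s ∧
      (∀ i, HasDerivAt (fun τ => X τ i) (d i) t) ∧ ∑ i, d i * Real.log (s i) ≤ c) :
    fairValue C (X b) - fairValue C (X a) ≤ c * (b - a) := by
  have hcont : ContinuousOn (fun τ => fairValue C (X τ)) (Icc a b) :=
    hC.continuousOn_fairValue.comp (continuousOn_pi.2 fun i => (hLip i).continuousOn) hX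
  refine sub_le_mul_sub_of_ae_slope_le hab hcont
    (fun t ht => hC.exists_slope_fairValue_le hX hLip ht) ?_
  filter_upwards [hae, Measure.ae_ne volume a] with t ht hta htI m hm
  have htI' : t ∈ Ioo a b := ⟨htI.1.lt_of_ne' hta, htI.2⟩
  obtain ⟨s, d, hs, hd, hdrift⟩ := ht htI'
  exact hs.eventually_slope_fairValue_le hC
    (mem_of_superset (Icc_mem_nhds htI'.1 htI'.2) hX) hd (hdrift.trans_lt hm)

theorem IsRateRegion.eq_zero_of_ae_drift (hC : IsRateRegion C) {B ρ : ℝ} {L : NNReal}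
    (hB : ∀ s ∈ C, ∀ i, s i ≤ B) (hρ : 1 < ρ) (hρC : (fun _ => ρ) ∈ C)
    (hX : ∀ t ≥ 0, 0 ≤ X t) (hLip : ∀ i, LipschitzOnWith L (fun τ => X τ i) (Ici 0))
    (hae : ∀ᵐ t, 0 < t → ∃ s d : ι → ℝ, IsPropFair C (X t) s ∧
      (∀ i, HasDerivAt (fun τ => X τ i) (d i) t) ∧ ∑ i, d i * Real.log (s i) ≤ 0 ∧
        (X t ≠ 0 → ∑ i, d i * Real.log (s i) ≤ -c))
    (ht : 0 ≤ t) (hct : Real.log B * ∑ i, X 0 i ≤ c * t) : X t = 0 := by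
  by_contra hXt
  have hpos : 0 < fairValue C (X t) :=
    not_le.1 fun h => hXt (hC.eq_zero_of_fairValue_nonpos (hX t ht) hρ hρC h)
  have hsub {a : ℝ} (ha : 0 ≤ a) : Icc a t ⊆ Ici 0 :=
    Icc_subset_Ici_self.trans (Ici_subset_Ici.2 ha)
  by_cases hempty : ∃ a ∈ Icc 0 t, X a = 0
  · obtain ⟨a, ha, hXa⟩ := hempty
    have hle := hC.fairValue_sub_le_of_ae (c := 0) ha.2 (fun τ hτ => hX τ (hsub ha.1 hτ))
      (fun i => (hLip i).mono (hsub ha.1)) (by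
        filter_upwards [hae] with τ h hτ
        obtain ⟨s, d, hs, hd, hdrift, -⟩ := h (ha.1.trans_lt hτ.1)
        exact ⟨s, d, hs, hd, hdrift⟩)
    have hzero := hC.fairValue_le (hX a ha.1) hB
    simp only [hXa, Pi.zero_apply, Finset.sum_const_zero, mul_zero] at hzero hle
    linarith
  · push Not at hempty
    have hle := hC.fairValue_sub_le_of_ae (c := -c) ht (fun τ hτ => hX τ (hsub le_rfl hτ))
      (fun i => (hLip i).mono (hsub le_rfl)) (by
        filter_upwards [hae] with τ h hτ
        obtain ⟨s, d, hs, hd, -, hdrift⟩ := h hτ.1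
        exact ⟨s, d, hs, hd, hdrift (hempty τ (Ioo_subset_Icc_self hτ))⟩)
    linarith [hC.fairValue_le (hX 0 le_rfl) hB]

end FairValueAlongPaths

section RouteDrift

variable {u : ℕ → ℝ} {n : ℕ}

theorem sub_mul_log_le_sub_sq_sqrt {a b : ℝ} (ha : 0 < a) (hb : 0 < b) :
    (a - b) * Real.log b ≤
      (a * Real.log a - a) - (b * Real.log b - b) - (√a - √b) ^ 2 := by
  have hlog : Real.log b - Real.log a ≤ 2 * (√b / √a - 1) := by
    have h := Real.log_le_sub_one_of_pos (div_pos (Real.sqrt_pos.2 hb) (Real.sqrt_pos.2 ha))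
    rw [Real.log_div (Real.sqrt_pos.2 hb).ne' (Real.sqrt_pos.2 ha).ne', Real.log_sqrt hb.le,
      Real.log_sqrt ha.le] at h
    linarith
  have hmul : a * (√b / √a - 1) = √a * √b - a := by
    rw [mul_sub_one, ← mul_div_assoc, mul_div_right_comm, Real.div_sqrt]
  have := mul_le_mul_of_nonneg_left hlog ha.le
  rw [sub_sq, Real.sq_sqrt ha.le, Real.sq_sqrt hb.le]
  linarith

theorem sum_range_sub_mul_log_le (h0 : u 0 = 1) (hpos : ∀ k ≤ n, 0 < u k) :
    ∑ k ∈ Finset.range n, (u k - u (k + 1)) * Real.log (u (k + 1)) ≤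
      -∑ k ∈ Finset.range n, (√(u k) - √(u (k + 1))) ^ 2 := by
  have hsum := Finset.sum_le_sum fun k (hk : k ∈ Finset.range n) =>
    sub_mul_log_le_sub_sq_sqrt (hpos k (Finset.mem_range.1 hk).le)
      (hpos (k + 1) (Finset.mem_range.1 hk))
  rw [Finset.sum_sub_distrib, Finset.sum_range_sub' fun k => u k * Real.log (u k) - u k, h0,
    Real.log_one] at hsum
  have hmin : u n - 1 ≤ u n * Real.log (u n) := by
    have hn := hpos n le_rfl
    calc u n - 1 = u n * (1 - (u n)⁻¹) := by rw [mul_sub, mul_inv_cancel₀ hn.ne', mul_one]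
      _ ≤ u n * Real.log (u n) :=
        mul_le_mul_of_nonneg_left (Real.one_sub_inv_le_log_of_pos hn) hn.le
  linarith

theorem sq_sub_le_mul_sum_range_sq_sub (v : ℕ → ℝ) {k : ℕ} (hk : k ≤ n) :
    (v k - v 0) ^ 2 ≤ n * ∑ i ∈ Finset.range n, (v i - v (i + 1)) ^ 2 := by
  calc (v k - v 0) ^ 2 = (∑ i ∈ Finset.range k, (v i - v (i + 1))) ^ 2 := by
        rw [Finset.sum_range_sub', ← neg_sub, neg_sq]
    _ ≤ k * ∑ i ∈ Finset.range k, (v i - v (i + 1)) ^ 2 := by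
        simpa using sq_sum_le_card_mul_sum_sq (s := Finset.range k) (f := fun i => v i - v (i + 1))
    _ ≤ n * ∑ i ∈ Finset.range n, (v i - v (i + 1)) ^ 2 := by gcongr

theorem sum_range_sub_mul_log_le_neg (h0 : u 0 = 1) (hpos : ∀ k ≤ n, 0 < u k) {k : ℕ}
    (hk : k < n) {ρ : ℝ} (hρ : 1 ≤ ρ) (hu : ρ ≤ u (k + 1)) :
    ∑ k ∈ Finset.range n, (u k - u (k + 1)) * Real.log (u (k + 1)) ≤ -((√ρ - 1) ^ 2 / n) := by
  refine (sum_range_sub_mul_log_le h0 hpos).trans (neg_le_neg ?_)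
  have hn : (0 : ℝ) < n := by exact_mod_cast hk.pos
  rw [div_le_iff₀' hn]
  have hroot : 0 ≤ √ρ - 1 := sub_nonneg.2 (Real.one_le_sqrt.2 hρ)
  calc (√ρ - 1) ^ 2 ≤ (√(u (k + 1)) - √(u 0)) ^ 2 := by
        rw [h0, Real.sqrt_one]
        gcongr
    _ ≤ n * ∑ k ∈ Finset.range n, (√(u k) - √(u (k + 1))) ^ 2 :=
        sq_sub_le_mul_sum_range_sq_sub (fun k => √(u k)) hk

/-- The classes of a network whose route `r` has `K r` links: class `⟨r, k⟩` stands for the work of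
route `r` at its `k`-th link, with links counted from `0`. -/
abbrev RouteClass {R : Type*} (K : R → ℕ) : Type _ := Σ r, Fin (K r)

variable {R : Type*} {K : R → ℕ} {a : R → ℝ} {y : R → ℕ → ℝ}

theorem mul_sum_range_sub_mul_log_nonpos (ha : 0 ≤ a) (hy0 : ∀ r, y r 0 = 1)
    (hypos : ∀ r, ∀ k ≤ K r, 0 < y r k) (r : R) :
    a r * ∑ k ∈ Finset.range (K r), (y r k - y r (k + 1)) * Real.log (y r (k + 1)) ≤ 0 :=
  mul_nonpos_of_nonneg_of_nonpos (ha r) <| (sum_range_sub_mul_log_le (hy0 r) (hypos r)).trans <|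
    neg_nonpos.2 <| Finset.sum_nonneg fun _ _ => sq_nonneg _

theorem exists_pos_le_mul_sq_sqrt_sub_one_div [Finite R] [Nonempty R] {ρ : ℝ}
    (hK : ∀ r, 1 ≤ K r) (ha : ∀ r, 0 < a r) (hρ : 1 < ρ) :
    ∃ c > 0, ∀ r, c ≤ a r * ((√ρ - 1) ^ 2 / K r) := by
  obtain ⟨r, hr⟩ := Finite.exists_min fun r => a r * ((√ρ - 1) ^ 2 / K r)
  have hroot : 0 < √ρ - 1 := sub_pos.2 ((Real.lt_sqrt zero_le_one).2 (by simpa using hρ))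
  have hKr : (0 : ℝ) < K r := by exact_mod_cast hK r
  exact ⟨_, mul_pos (ha r) (by positivity), hr⟩

variable [Fintype R]

theorem sum_routeClass (F : R → ℕ → ℝ) :
    ∑ p : RouteClass K, F p.1 p.2 = ∑ r, ∑ k ∈ Finset.range (K r), F r k := by
  rw [Fintype.sum_sigma]
  exact Finset.sum_congr rfl fun r _ => (Finset.sum_range (F r)).symm

/-- The drift of the Lyapunov function when class `⟨r, k⟩` receives work at rate `a r * y r k` and
releases it at rate `a r * y r (k + 1)`. -/
noncomputable def routeDrift (K : R → ℕ) (a : R → ℝ) (y : R → ℕ → ℝ) : ℝ :=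
  ∑ p : RouteClass K, a p.1 * (y p.1 p.2 - y p.1 (p.2 + 1)) * Real.log (y p.1 (p.2 + 1))

theorem routeDrift_eq : routeDrift K a y =
    ∑ r, a r * ∑ k ∈ Finset.range (K r), (y r k - y r (k + 1)) * Real.log (y r (k + 1)) := by
  simp only [routeDrift, Finset.mul_sum, ← mul_assoc]
  exact sum_routeClass fun r k => a r * (y r k - y r (k + 1)) * Real.log (y r (k + 1))

theorem routeDrift_nonpos (ha : 0 ≤ a) (hy0 : ∀ r, y r 0 = 1)
    (hypos : ∀ r, ∀ k ≤ K r, 0 < y r k) : routeDrift K a y ≤ 0 :=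
  routeDrift_eq.trans_le <| Finset.sum_nonpos fun r _ =>
    mul_sum_range_sub_mul_log_nonpos ha hy0 hypos r

theorem routeDrift_le_neg (ha : 0 ≤ a) (hy0 : ∀ r, y r 0 = 1)
    (hypos : ∀ r, ∀ k ≤ K r, 0 < y r k) {ρ c : ℝ} (hρ : 1 ≤ ρ)
    (hc : ∀ r, c ≤ a r * ((√ρ - 1) ^ 2 / K r)) (p : RouteClass K) (hp : ρ ≤ y p.1 (p.2 + 1)) :
    routeDrift K a y ≤ -c := by
  rw [routeDrift_eq, Fintype.sum_eq_add_sum_compl p.1]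
  have hroute := mul_le_mul_of_nonneg_left
    (sum_range_sub_mul_log_le_neg (hy0 p.1) (hypos p.1) p.2.2 hρ hp) (ha p.1)
  have hrest := Finset.sum_nonpos fun r (_ : r ∈ ({p.1}ᶜ : Finset R)) =>
    mul_sum_range_sub_mul_log_nonpos ha hy0 hypos r
  linarith [hc p.1]

end RouteDrift

theorem sum_mul_log_le_sum_mul_log_share {ι : Type*} {T : Finset ι} {x E : ι → ℝ}
    (hx : ∀ i ∈ T, 0 ≤ x i) (hE : ∀ i ∈ T, 0 ≤ E i) (hpos : ∀ i ∈ T, 0 < x i → 0 < E i) :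
    ∑ i ∈ T, x i * Real.log (E i) ≤
      ∑ i ∈ T, x i * Real.log (x i / (∑ k ∈ T, x k) * ∑ k ∈ T, E k) := by
  rcases (Finset.sum_nonneg hx).eq_or_lt with hsum | hsum
  · have hzero := (Finset.sum_eq_zero_iff_of_nonneg hx).1 hsum.symm
    exact (Finset.sum_congr rfl fun i hi => by simp [hzero i hi]).le
  obtain ⟨k, hk, hxk⟩ := (Finset.sum_pos_iff_of_nonneg hx).1 hsum
  have hEsum : 0 < ∑ k ∈ T, E k := Finset.sum_pos' hE ⟨k, hk, hpos k hk hxk⟩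
  set X := ∑ k ∈ T, x k
  set S := ∑ k ∈ T, E k
  have hterm (i : ι) (hi : i ∈ T) :
      x i * Real.log (E i) ≤ x i * Real.log (x i / X * S) + (E i * (X / S) - x i) := by
    rcases (hx i hi).eq_or_lt with hxi | hxi
    · simpa [← hxi] using mul_nonneg (hE i hi) (by positivity)
    · have hEi := hpos i hi hxi
      have hlog := Real.log_le_sub_one_of_pos (show 0 < E i / (x i / X * S) by positivity)
      rw [Real.log_div hEi.ne' (by positivity)] at hlog
      calc x i * Real.log (E i)
          ≤ x i * (Real.log (x i / X * S) + (E i / (x i / X * S) - 1)) := by gcongr; linarith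
        _ = x i * Real.log (x i / X * S) + (E i * (X / S) - x i) := by field_simp
  refine (Finset.sum_le_sum hterm).trans_eq ?_
  rw [Finset.sum_add_distrib, Finset.sum_sub_distrib, ← Finset.sum_mul,
    mul_div_cancel₀ _ hEsum.ne', sub_self, add_zero]

section Classes

variable {ι J : Type*} [Fintype ι] {π : ι → J} {a x y φ : ι → ℝ} {C : Set (J → ℝ)}

/-- The total of `x` over the classes served at each link, where `π i` is the link of class `i`. -/
noncomputable def linkLoad (π : ι → J) : (ι → ℝ) →ₗ[ℝ] (J → ℝ) :=
  LinearMap.pi fun j => ∑ i with π i = j, LinearMap.proj i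

theorem linkLoad_apply (x : ι → ℝ) (j : J) : linkLoad π x j = ∑ i with π i = j, x i := by
  simp [linkLoad]

theorem le_linkLoad (hx : 0 ≤ x) (i : ι) : x i ≤ linkLoad π x (π i) := by
  rw [linkLoad_apply]
  exact Finset.single_le_sum (fun i _ => hx i) (by simp)

theorem sum_mul_comp_eq_sum_linkLoad [Fintype J] (x : ι → ℝ) (g : J → ℝ) :
    ∑ i, x i * g (π i) = ∑ j, linkLoad π x j * g j := by
  rw [← Finset.sum_fiberwise Finset.univ π]
  refine Finset.sum_congr rfl fun j _ => ?_
  rw [linkLoad_apply, Finset.sum_mul]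
  exact Finset.sum_congr rfl fun i hi => by rw [(Finset.mem_filter.1 hi).2]

/-- The region of the service rates of the classes, measured in units of the arrival rates `a`,
that are compatible with the link capacities `C`. -/
def relativeRegion (π : ι → J) (a : ι → ℝ) (C : Set (J → ℝ)) : Set (ι → ℝ) :=
  {y | 0 ≤ y ∧ linkLoad π (a * y) ∈ C}

theorem isCompact_relativeRegion (ha : ∀ i, 0 < a i) (hC : IsCompact C) :
    IsCompact (relativeRegion π a C) := by
  choose B hB using fun j => (hC.image (continuous_apply j)).bddAbove
  refine (isCompact_univ_pi fun i => isCompact_Icc (a := 0) (b := B (π i) / a i)).of_isClosed_subset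
    ?_ fun y hy i _ => ⟨hy.1 i, (le_div_iff₀' (ha i)).2 ?_⟩
  · refine isClosed_Ici.inter (hC.isClosed.preimage ?_)
    exact (linkLoad π).continuous_of_finiteDimensional.comp (continuous_const.mul continuous_id)
  · exact (le_linkLoad (mul_nonneg (fun i => (ha i).le) hy.1) i).trans
      (hB _ (mem_image_of_mem _ hy.2))

theorem convex_relativeRegion (hC : Convex ℝ C) : Convex ℝ (relativeRegion π a C) :=
  (convex_Ici 0).inter (hC.linear_preimage (linkLoad π ∘ₗ LinearMap.mulLeft ℝ a))

theorem exists_one_lt_const_mem_relativeRegion (ha : linkLoad π a ∈ interior C) :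
    ∃ ρ > 1, (fun _ => ρ) ∈ relativeRegion π a C := by
  have hcont : Continuous fun ρ : ℝ => ρ • linkLoad π a := by fun_prop
  have hnear : ∀ᶠ ρ in 𝓝[>] (1 : ℝ), ρ • linkLoad π a ∈ C :=
    (hcont.continuousAt.eventually_mem (by simpa using mem_interior_iff_mem_nhds.1 ha)).filter_mono
      nhdsWithin_le_nhds
  obtain ⟨ρ, hρC, hρ⟩ := (hnear.and self_mem_nhdsWithin).exists
  refine ⟨ρ, hρ, fun _ => zero_le_one.trans (le_of_lt hρ), ?_⟩
  rwa [← map_smul, show ρ • a = a * fun _ => ρ from funext fun i => mul_comm ρ (a i)] at hρC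

theorem isRateRegion_relativeRegion (ha : ∀ i, 0 < a i) (hC : IsCompact C)
    (hconv : Convex ℝ C) (hload : linkLoad π a ∈ interior C) :
    IsRateRegion (relativeRegion π a C) where
  isCompact := isCompact_relativeRegion ha hC
  convex := convex_relativeRegion hconv
  nonneg _ hy := hy.1
  exists_pos :=
    let ⟨_, hρ, hmem⟩ := exists_one_lt_const_mem_relativeRegion hload
    ⟨_, hmem, fun _ => zero_lt_one.trans hρ⟩

theorem linkLoad_mul_share {s : J → ℝ} (ha : ∀ i, a i ≠ 0)
    (hφ : ∀ j, ∑ i with π i = j, φ i = 1) :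
    linkLoad π (a * fun i => φ i * s (π i) / a i) = s := by
  ext j
  rw [linkLoad_apply]
  calc ∑ i with π i = j, (a * fun i => φ i * s (π i) / a i) i = ∑ i with π i = j, φ i * s j :=
        Finset.sum_congr rfl fun i hi => by
          rw [Pi.mul_apply, mul_div_cancel₀ _ (ha i), (Finset.mem_filter.1 hi).2]
    _ = s j := by rw [← Finset.sum_mul, hφ, one_mul]

theorem linkLoad_pos (hx : 0 ≤ x) {i : ι} (hi : 0 < x i) : 0 < linkLoad π x (π i) :=
  hi.trans_le (le_linkLoad hx i)

theorem exists_pos_of_linkLoad_pos (hx : 0 ≤ x) {j : J} (h : 0 < linkLoad π x j) :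
    ∃ i, π i = j ∧ 0 < x i := by
  rw [linkLoad_apply] at h
  obtain ⟨i, hi, hxi⟩ := (Finset.sum_pos_iff_of_nonneg fun i _ => hx i).1 h
  exact ⟨i, (Finset.mem_filter.1 hi).2, hxi⟩

theorem sum_mul_log_share_div [Fintype J] {s : J → ℝ} (hx : 0 ≤ x) (ha : ∀ i, 0 < a i)
    (hφ : ∀ i, 0 < x i → 0 < φ i) (hs : ∀ j, 0 < linkLoad π x j → 0 < s j) :
    ∑ i, x i * Real.log (φ i * s (π i) / a i) =
      ∑ i, x i * (Real.log (φ i) - Real.log (a i)) + ∑ j, linkLoad π x j * Real.log (s j) := by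
  rw [← sum_mul_comp_eq_sum_linkLoad x fun j => Real.log (s j), ← Finset.sum_add_distrib]
  refine Finset.sum_congr rfl fun i _ => ?_
  rcases (hx i).eq_or_lt with hxi | hxi
  · simp [← hxi]
  · have hsi := hs _ (linkLoad_pos hx hxi)
    have hφi := hφ i hxi
    rw [Real.log_div (by positivity) (ha i).ne', Real.log_mul hφi.ne' hsi.ne']
    ring

theorem sum_mul_log_le_sum_mul_log_linkLoad (hx : 0 ≤ x) (ha : ∀ i, 0 < a i)
    (hφ : ∀ i, 0 < x i → φ i = x i / linkLoad π x (π i)) (hy : 0 ≤ y)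
    (hpos : ∀ i, 0 < x i → 0 < y i) :
    ∑ i, x i * Real.log (y i) ≤
      ∑ i, x i * Real.log (φ i * linkLoad π (a * y) (π i) / a i) := by
  have hlog {z : ι → ℝ} (hz : ∀ i, 0 < x i → 0 < z i) : ∑ i, x i * Real.log (z i / a i) =
      ∑ i, x i * Real.log (z i) - ∑ i, x i * Real.log (a i) := by
    rw [← Finset.sum_sub_distrib]
    refine Finset.sum_congr rfl fun i _ => ?_
    rcases (hx i).eq_or_lt with hxi | hxi
    · simp [← hxi]
    · rw [Real.log_div (hz i hxi).ne' (ha i).ne', mul_sub]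
  have hE : 0 ≤ a * y := mul_nonneg (fun i => (ha i).le) hy
  have hEpos (i : ι) (hi : 0 < x i) : 0 < (a * y) i := mul_pos (ha i) (hpos i hi)
  have hgibbs : ∑ i, x i * Real.log ((a * y) i) ≤
      ∑ i, x i * Real.log (φ i * linkLoad π (a * y) (π i)) := by
    have hπ : ∀ i ∈ Finset.univ, π i ∈ Finset.univ.image π := fun i => Finset.mem_image_of_mem π
    simp only [← Finset.sum_fiberwise_of_maps_to hπ fun i => x i * Real.log _]
    refine Finset.sum_le_sum fun j _ => (sum_mul_log_le_sum_mul_log_share (fun i _ => hx i)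
      (fun i _ => hE i) fun i _ => hEpos i).trans_eq (Finset.sum_congr rfl fun i hi => ?_)
    rcases (hx i).eq_or_lt with hxi | hxi
    · simp [← hxi]
    · rw [hφ i hxi, (Finset.mem_filter.1 hi).2, linkLoad_apply, linkLoad_apply]
  have hφE (i : ι) (hi : 0 < x i) : 0 < φ i * linkLoad π (a * y) (π i) :=
    mul_pos (hφ i hi ▸ div_pos hi (linkLoad_pos hx hi)) (linkLoad_pos hE (hEpos i hi))
  calc ∑ i, x i * Real.log (y i) = ∑ i, x i * Real.log ((a * y) i / a i) :=
        Finset.sum_congr rfl fun i _ => by rw [Pi.mul_apply, mul_div_cancel_left₀ _ (ha i).ne']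
    _ ≤ ∑ i, x i * Real.log (φ i * linkLoad π (a * y) (π i) / a i) := by
        rw [hlog hEpos, hlog hφE]
        exact sub_le_sub_right hgibbs _

theorem IsPropFair.relativeRegion [Fintype J] {s : J → ℝ} (h : IsPropFair C (linkLoad π x) s)
    (hx : 0 ≤ x) (ha : ∀ i, 0 < a i) (hs : 0 ≤ s) (hφ0 : 0 ≤ φ)
    (hφ1 : ∀ j, ∑ i with π i = j, φ i = 1)
    (hφ : ∀ i, 0 < x i → φ i = x i / linkLoad π x (π i)) :
    IsPropFair (relativeRegion π a C) x fun i => φ i * s (π i) / a i := by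
  have hφpos (i : ι) (hi : 0 < x i) : 0 < φ i := hφ i hi ▸ div_pos hi (linkLoad_pos hx hi)
  refine ⟨⟨fun i => div_nonneg (mul_nonneg (hφ0 i) (hs _)) (ha i).le, ?_⟩, fun i hi =>
    div_pos (mul_pos (hφpos i hi) (h.pos _ (linkLoad_pos hx hi))) (ha i), fun y hy hypos => ?_⟩
  · rw [linkLoad_mul_share (fun i => (ha i).ne') hφ1]
    exact h.mem
  have hload (j : J) (hj : 0 < linkLoad π x j) : 0 < linkLoad π (a * y) j := by
    obtain ⟨i, rfl, hi⟩ := exists_pos_of_linkLoad_pos hx hj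
    exact linkLoad_pos (mul_nonneg (fun i => (ha i).le) hy.1) (mul_pos (ha i) (hypos i hi))
  refine (sum_mul_log_le_sum_mul_log_linkLoad hx ha hφ hy.1 hypos).trans ?_
  rw [sum_mul_log_share_div hx ha hφpos hload, sum_mul_log_share_div hx ha hφpos h.pos]
  exact add_le_add_right (h.le _ hy.2 hload) _

end Classes

section IntegralPaths

variable {f d : ℝ → ℝ}

theorem lipschitzOnWith_of_eq_integral {L : NNReal}
    (hint : ∀ t ≥ 0, IntervalIntegrable d volume 0 t)
    (hf : ∀ t ≥ 0, f t = f 0 + ∫ τ in 0..t, d τ) (hd : ∀ᵐ t, 0 ≤ t → |d t| ≤ L) :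
    LipschitzOnWith L f (Ici 0) := by
  refine LipschitzOnWith.of_dist_le_mul fun t ht u hu => ?_
  rw [Real.dist_eq, hf t ht, hf u hu, add_sub_add_left_eq_sub,
    intervalIntegral.integral_interval_sub_left (hint t ht) (hint u hu)]
  refine intervalIntegral.norm_integral_le_of_norm_le_const_ae (E := ℝ) ?_
  filter_upwards [hd] with τ hτ hmem
  exact hτ ((le_min hu ht).trans hmem.1.le)

theorem ae_hasDerivAt_of_eq_integral (hint : ∀ t ≥ 0, IntervalIntegrable d volume 0 t)
    (hf : ∀ t ≥ 0, f t = f 0 + ∫ τ in 0..t, d τ) : ∀ᵐ t, 0 < t → HasDerivAt f (d t) t := by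
  have hder (n : ℕ) := (hint n n.cast_nonneg).ae_hasDerivAt_integral
  filter_upwards [ae_all_iff.2 hder] with t ht ht0
  obtain ⟨n, hn⟩ := exists_nat_ge t
  have hmem (τ : ℝ) (h0 : 0 ≤ τ) (hτ : τ ≤ n) : τ ∈ uIcc 0 (n : ℝ) := by
    rw [uIcc_of_le n.cast_nonneg]
    exact ⟨h0, hτ⟩
  have hderiv := (ht n (hmem t ht0.le hn) 0 (hmem 0 le_rfl n.cast_nonneg)).const_add (f 0)
  refine hderiv.congr_of_eventuallyEq ?_
  filter_upwards [lt_mem_nhds ht0] with τ hτ using hf τ hτ.le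

end IntegralPaths

section FluidState

variable {J R : Type} {K : R → ℕ} {link : R → ℕ → J} {a : R → ℝ} {C : Set (J → ℝ)}

/-- The link at which a class is served. -/
abbrev classLink (K : R → ℕ) (link : R → ℕ → J) (p : RouteClass K) : J := link p.1 p.2

/-- The values of `x` at the pairs of a link and a route through it, as a family over the classes;
the remaining entries of `x` are arbitrary. -/
abbrev classState (K : R → ℕ) (link : R → ℕ → J) (x : J → R → ℝ) (p : RouteClass K) : ℝ :=
  x (link p.1 p.2) p.1

/-- The rates at which work of route `r` moves along its links, in units of the arrival rate `a r`:
the value at `0` is the inflow at the first link and the value at `k + 1` the outflow of the link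
with index `k`. -/
noncomputable def relativeRate (link : R → ℕ → J) (a : R → ℝ) (φ : J → R → ℝ) (s : J → ℝ) (r : R) :
    ℕ → ℝ
  | 0 => 1
  | k + 1 => φ (link r k) r * s (link r k) / a r

/-- The service rates of the classes, in units of the arrival rates of their routes. -/
noncomputable abbrev classRate (K : R → ℕ) (link : R → ℕ → J) (a : R → ℝ) (φ : J → R → ℝ)
    (s : J → ℝ) (p : RouteClass K) : ℝ :=
  relativeRate link a φ s p.1 (p.2 + 1)

variable [Fintype R]

/-- The region of the service rates of the classes compatible with the link capacities, in units of
the arrival rates of their routes. -/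
abbrev classRegion (K : R → ℕ) (link : R → ℕ → J) (a : R → ℝ) (C : Set (J → ℝ)) :
    Set (RouteClass K → ℝ) :=
  relativeRegion (classLink K link) (fun p => a p.1) C

theorem linkLoad_classState
    (hlink : ∀ r, ∀ k < K r, ∀ l < K r, link r k = link r l → k = l) (x : J → R → ℝ) :
    linkLoad (classLink K link) (classState K link x) = qOf K link x := by
  ext j
  rw [linkLoad_apply]
  refine Finset.sum_nbij Sigma.fst (fun p hp => ?_) (fun p hp q hq hpq => ?_) (fun r hr => ?_)
    fun p hp => ?_
  · simpa using ⟨p.2, p.2.2, (Finset.mem_filter.1 hp).2⟩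
  · obtain ⟨r, k⟩ := p
    obtain ⟨r', l⟩ := q
    obtain rfl : r = r' := hpq
    simp only [Finset.coe_filter, Finset.mem_univ, true_and, mem_ofPred_eq] at hp hq
    rw [Fin.ext (hlink r k k.2 l l.2 (hp.trans hq.symm))]
  · obtain ⟨k, hk, hj⟩ := (Finset.mem_filter.1 hr).2
    exact ⟨⟨r, k, hk⟩, by simpa using hj, rfl⟩
  · rw [← (Finset.mem_filter.1 hp).2]

theorem qOf_nonneg {x : J → R → ℝ} (hx : ∀ r, ∀ k < K r, 0 ≤ x (link r k) r) :
    0 ≤ qOf K link x := fun j => by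
  refine Finset.sum_nonneg fun r hr => ?_
  obtain ⟨k, hk, rfl⟩ := (Finset.mem_filter.1 hr).2
  exact hx r k hk

variable [Fintype J]

/-- The conditions of the fluid model at one instant: queue sizes `x` with drift `d`, service rates
`s` of the links and shares `φ` of the routes. -/
structure IsFluidState (K : R → ℕ) (link : R → ℕ → J) (a : R → ℝ) (C : Set (J → ℝ))
    (x d : J → R → ℝ) (s : J → ℝ) (φ : J → R → ℝ) : Prop where
  nonneg : 0 ≤ classState K link x
  isPropFair : IsPropFair C (qOf K link x) s
  share_nonneg : ∀ j r, 0 ≤ φ j r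
  sum_share : qOf K link φ = 1
  share_eq : ∀ j, 0 < qOf K link x j → ∀ r, (∃ k < K r, link r k = j) →
    φ j r = x j r / qOf K link x j
  drift_eq : ∀ r, ∀ k < K r, d (link r k) r =
    (if k = 0 then a r else φ (link r (k - 1)) r * s (link r (k - 1))) -
      φ (link r k) r * s (link r k)

namespace IsFluidState

variable {x d φ : J → R → ℝ} {s : J → ℝ}

theorem classState_drift_eq (h : IsFluidState K link a C x d s φ) (ha : ∀ r, 0 < a r)
    (p : RouteClass K) : classState K link d p =
      a p.1 * (relativeRate link a φ s p.1 p.2 - relativeRate link a φ s p.1 (p.2 + 1)) := by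
  obtain ⟨r, k, hk⟩ := p
  have har := (ha r).ne'
  rcases k with _ | k
  · simp [h.drift_eq r 0 hk, relativeRate, mul_sub, mul_div_cancel₀ _ har]
  · simp [h.drift_eq r (k + 1) hk, relativeRate, mul_sub, mul_div_cancel₀ _ har]

theorem isPropFair_relativeRate (h : IsFluidState K link a C x d s φ) (ha : ∀ r, 0 < a r)
    (hC : ∀ s ∈ C, ∀ j, 0 ≤ s j)
    (hlink : ∀ r, ∀ k < K r, ∀ l < K r, link r k = link r l → k = l) :
    IsPropFair (classRegion K link a C) (classState K link x) (classRate K link a φ s) := by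
  have hq := linkLoad_classState hlink x
  refine IsPropFair.relativeRegion (φ := classState K link φ) (by rw [hq]; exact h.isPropFair)
    h.nonneg (fun p => ha p.1) (hC s h.isPropFair.mem) (fun p => h.share_nonneg _ _) (fun j => ?_)
    fun p hp => ?_
  · rw [← linkLoad_apply, linkLoad_classState hlink, h.sum_share, Pi.one_apply]
  · rw [hq]
    exact h.share_eq _ (hq ▸ linkLoad_pos h.nonneg hp) _ ⟨p.2, p.2.2, rfl⟩

theorem relativeRate_pos (h : IsFluidState K link a C x d s φ) (ha : ∀ r, 0 < a r)
    (hpos : ∀ p, 0 < classState K link x p → 0 < classRate K link a φ s p)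
    (hd : ∀ p, classState K link x p = 0 → classState K link d p = 0) (r : R) {k : ℕ}
    (hk : k ≤ K r) : 0 < relativeRate link a φ s r k := by
  induction k with
  | zero => exact zero_lt_one
  | succ k ih =>
    let p : RouteClass K := ⟨r, k, hk⟩
    rcases (h.nonneg p).eq_or_lt with hp | hp
    · have hzero := hd p hp.symm
      rw [h.classState_drift_eq ha, mul_eq_zero, or_iff_right (ha r).ne', sub_eq_zero] at hzero
      exact (ih (Nat.le_of_succ_le hk)).trans_eq hzero
    · exact hpos p hp

theorem abs_drift_le (h : IsFluidState K link a C x d s φ) (ha : ∀ r, 0 < a r)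
    (hC : ∀ s ∈ C, ∀ j, 0 ≤ s j) {B : ℝ} (hB1 : 1 ≤ B)
    (hB : ∀ p, classRate K link a φ s p ≤ B) (p : RouteClass K) :
    |classState K link d p| ≤ (∑ r, a r) * B := by
  have hrate (k : ℕ) (hk : k ≤ K p.1) : relativeRate link a φ s p.1 k ∈ Icc 0 B := by
    rcases k with _ | k
    · exact ⟨zero_le_one, hB1⟩
    · exact ⟨div_nonneg (mul_nonneg (h.share_nonneg _ _) (hC s h.isPropFair.mem _)) (ha _).le,
        hB ⟨p.1, k, hk⟩⟩
  rw [h.classState_drift_eq ha, abs_mul, abs_of_pos (ha p.1)]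
  have hin := hrate p.2 p.2.2.le
  have hout := hrate (p.2 + 1) p.2.2
  exact mul_le_mul (Finset.single_le_sum (fun r _ => (ha r).le) (Finset.mem_univ p.1))
    (abs_sub_le_of_nonneg_of_le hin.1 hin.2 hout.1 hout.2) (abs_nonneg _)
    (Finset.sum_nonneg fun r _ => (ha r).le)

theorem sum_drift_mul_log_nonpos_and_le_neg (h : IsFluidState K link a C x d s φ)
    (ha : ∀ r, 0 < a r)
    (hfair : IsPropFair (classRegion K link a C) (classState K link x) (classRate K link a φ s))
    (hC : Convex ℝ C) (hd : ∀ p, classState K link x p = 0 → classState K link d p = 0) {ρ c : ℝ}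
    (hρ : 1 ≤ ρ) (hρC : (fun _ => ρ) ∈ classRegion K link a C)
    (hc : ∀ r, c ≤ a r * ((√ρ - 1) ^ 2 / K r)) :
    ∑ p, classState K link d p * Real.log (classRate K link a φ s p) ≤ 0 ∧
      (classState K link x ≠ 0 →
        ∑ p, classState K link d p * Real.log (classRate K link a φ s p) ≤ -c) := by
  have hpos := h.relativeRate_pos ha hfair.pos hd
  have hdrift : ∑ p, classState K link d p * Real.log (classRate K link a φ s p) =
      routeDrift K a (relativeRate link a φ s) :=
    Finset.sum_congr rfl fun p _ => by rw [h.classState_drift_eq ha]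
  rw [hdrift]
  refine ⟨routeDrift_nonpos (fun r => (ha r).le) (fun _ => rfl) hpos, fun hx => ?_⟩
  obtain ⟨p, hp⟩ := hfair.exists_le (convex_relativeRegion hC) h.nonneg hx hρC
  exact routeDrift_le_neg (fun r => (ha r).le) (fun _ => rfl) hpos hρ hc p hp

end IsFluidState

/-- A fluid model solution, where `d` is the derivative of `x`, with service rates `s` and route
shares `φ`. The initial state is not normalized. -/
structure IsFluidSolution (K : R → ℕ) (link : R → ℕ → J) (a : R → ℝ) (C : Set (J → ℝ))
    (x d : ℝ → J → R → ℝ) (s : ℝ → J → ℝ) (φ : ℝ → J → R → ℝ) : Prop where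
  intervalIntegrable : ∀ j r, ∀ t ≥ 0, IntervalIntegrable (fun τ => d τ j r) volume 0 t
  eq_integral : ∀ j r, ∀ t ≥ 0, x t j r = x 0 j r + ∫ τ in 0..t, d τ j r
  nonneg : ∀ t ≥ 0, 0 ≤ classState K link (x t)
  ae_isFluidState : ∀ᵐ t, 0 ≤ t → IsFluidState K link a C (x t) (d t) (s t) (φ t)

namespace IsFluidSolution

variable {x d φ : ℝ → J → R → ℝ} {s : ℝ → J → ℝ}

theorem lipschitzOnWith_classState (h : IsFluidSolution K link a C x d s φ) (ha : ∀ r, 0 < a r)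
    (hC : ∀ s ∈ C, ∀ j, 0 ≤ s j)
    (hlink : ∀ r, ∀ k < K r, ∀ l < K r, link r k = link r l → k = l) {B : ℝ} (hB1 : 1 ≤ B)
    (hB : ∀ y ∈ classRegion K link a C, ∀ p, y p ≤ B) (p : RouteClass K) :
    LipschitzOnWith ((∑ r, a r) * B).toNNReal (fun t => classState K link (x t) p) (Ici 0) := by
  refine lipschitzOnWith_of_eq_integral (h.intervalIntegrable _ _) (h.eq_integral _ _) ?_
  filter_upwards [h.ae_isFluidState] with t hstate ht
  have hmem := ((hstate ht).isPropFair_relativeRate ha hC hlink).mem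
  exact ((hstate ht).abs_drift_le ha hC hB1 (hB _ hmem) p).trans (Real.le_coe_toNNReal _)

theorem ae_hasDerivAt_classState (h : IsFluidSolution K link a C x d s φ) :
    ∀ᵐ t, 0 < t → ∀ p, HasDerivAt (fun τ => classState K link (x τ) p)
      (classState K link (d t) p) t := by
  filter_upwards [ae_all_iff.2 fun p : RouteClass K => ae_hasDerivAt_of_eq_integral
    (h.intervalIntegrable (link p.1 p.2) p.1) (h.eq_integral (link p.1 p.2) p.1)]
    with t hd ht p using hd p ht

theorem classState_eq_zero (h : IsFluidSolution K link a C x d s φ) (ha : ∀ r, 0 < a r)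
    (hC : ∀ s ∈ C, ∀ j, 0 ≤ s j) (hconv : Convex ℝ C)
    (hlink : ∀ r, ∀ k < K r, ∀ l < K r, link r k = link r l → k = l)
    (hregion : IsRateRegion (classRegion K link a C)) {B ρ c : ℝ} (hB1 : 1 ≤ B)
    (hB : ∀ y ∈ classRegion K link a C, ∀ p, y p ≤ B) (hρ : 1 < ρ)
    (hρC : (fun _ => ρ) ∈ classRegion K link a C)
    (hc : ∀ r, c ≤ a r * ((√ρ - 1) ^ 2 / K r)) {t : ℝ} (ht : 0 ≤ t)
    (hct : Real.log B * ∑ p, classState K link (x 0) p ≤ c * t) :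
    classState K link (x t) = 0 := by
  refine hregion.eq_zero_of_ae_drift (X := fun t => classState K link (x t)) hB hρ hρC h.nonneg
    (h.lipschitzOnWith_classState ha hC hlink hB1 hB) ?_ ht hct
  filter_upwards [h.ae_isFluidState, h.ae_hasDerivAt_classState] with τ hstate hd hτ
  have hfair := (hstate hτ.le).isPropFair_relativeRate ha hC hlink
  have hzero (p : RouteClass K) (hp : classState K link (x τ) p = 0) :
      classState K link (d τ) p = 0 := by
    refine IsLocalMin.hasDerivAt_eq_zero ?_ (hd hτ p)
    filter_upwards [lt_mem_nhds hτ] with u hu using hp.trans_le (h.nonneg u hu.le p)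
  exact ⟨_, _, hfair, hd hτ,
    (hstate hτ.le).sum_drift_mul_log_nonpos_and_le_neg ha hfair hconv hzero hρ.le hρC hc⟩

end IsFluidSolution

end FluidState

/-- Fluid stability of the Proportional Scheduler in multihop networks with
fixed routing: there is a time `T > 0`, depending only on the network data,
by which every fluid model solution starting with unit total mass has emptied.
A fluid model solution is a locally absolutely continuous `x` (written as the
integral of a locally (interval-)integrable function `d`), together with
measurable allocations `s(t) ∈ C` and route-shares `φ(t) ∈ [0,1]^E`, such that
almost everywhere: (i) `s(t)` is a proportionally fair allocation for the queue
sizes `q(t)`; (ii) the shares `φ(t)` sum to one at every link and equal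
`x_{jr}(t)/q_j(t)` whenever `q_j(t) > 0`; (iii) each coordinate of `x` evolves
as inflow minus outflow, the inflow at the first link of a route being `ā_r`. -/
theorem proportional_scheduler_fluid_stability {J R : Type} [Fintype J] [Fintype R]
    [Nonempty J] [Nonempty R]
    (K : R → ℕ) (hK : ∀ r, 1 ≤ K r)
    (link : R → ℕ → J)
    (hlink_inj : ∀ r, ∀ k < K r, ∀ l < K r, link r k = link r l → k = l)
    (hcover : ∀ j, ∃ r, ∃ k < K r, link r k = j)
    (abar : R → ℝ) (habar_pos : ∀ r, 0 < abar r)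
    (C : Set (J → ℝ)) (hC_compact : IsCompact C) (hC_convex : Convex ℝ C)
    (hC_int : (interior C).Nonempty) (hC_nonneg : ∀ s ∈ C, ∀ j, 0 ≤ s j)
    (habarJ_int :
      (fun j => ∑ r ∈ Finset.univ.filter (fun r => ∃ k < K r, link r k = j), abar r)
        ∈ interior C) :
    ∃ T > (0 : ℝ), ∀ (x d : ℝ → J → R → ℝ) (s : ℝ → J → ℝ) (φ : ℝ → J → R → ℝ),
      (∀ j r, ∀ t ≥ (0 : ℝ), IntervalIntegrable (fun τ => d τ j r) volume 0 t) →
      (∀ j r, ∀ t ≥ (0 : ℝ), x t j r = x 0 j r + ∫ τ in (0 : ℝ)..t, d τ j r) →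
      (∀ t ≥ (0 : ℝ), ∀ r, ∀ k < K r, 0 ≤ x t (link r k) r) →
      (∑ r, ∑ k ∈ Finset.range (K r), x 0 (link r k) r) = 1 →
      Measurable s → Measurable φ →
      (∀ᵐ t : ℝ, 0 ≤ t →
        -- (i) proportionally fair allocation
        (s t ∈ C ∧ (∀ j, 0 < qOf K link (x t) j → 0 < s t j) ∧
          ∀ s' ∈ C, (∀ j, 0 < qOf K link (x t) j → 0 < s' j) →
            ∑ j ∈ Finset.univ.filter (fun j => 0 < qOf K link (x t) j),
                qOf K link (x t) j * Real.log (s' j)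
              ≤ ∑ j ∈ Finset.univ.filter (fun j => 0 < qOf K link (x t) j),
                  qOf K link (x t) j * Real.log (s t j)) ∧
        -- (ii) route shares
        ((∀ j r, 0 ≤ φ t j r ∧ φ t j r ≤ 1) ∧
          (∀ j, ∑ r ∈ Finset.univ.filter (fun r => ∃ k < K r, link r k = j),
              φ t j r = 1) ∧
          (∀ j, 0 < qOf K link (x t) j →
            ∀ r, (∃ k < K r, link r k = j) →
              φ t j r = x t j r / qOf K link (x t) j)) ∧
        -- (iii) dynamics: inflow minus outflow
        (∀ r, ∀ k < K r,
          d t (link r k) r =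
            (if k = 0 then abar r else φ t (link r (k - 1)) r * s t (link r (k - 1)))
              - φ t (link r k) r * s t (link r k))) →
      ∀ t ≥ T, ∀ r, ∀ k < K r, x t (link r k) r = 0 := by
  have hload : linkLoad (classLink K link) (fun p => abar p.1) ∈ interior C := by
    rwa [show _ = qOf K link fun _ => abar from linkLoad_classState hlink_inj fun _ => abar]
  have hregion : IsRateRegion (classRegion K link abar C) :=
    isRateRegion_relativeRegion (fun p => habar_pos p.1) hC_compact hC_convex hload
  obtain ⟨ρ, hρ, hρC⟩ := exists_one_lt_const_mem_relativeRegion hload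
  obtain ⟨B, hB⟩ := exists_forall_apply_le_of_isCompact hregion.isCompact
  obtain ⟨c, hc0, hc⟩ := exists_pos_le_mul_sq_sqrt_sub_one_div hK habar_pos hρ
  have hB1 : 1 ≤ B := let ⟨r⟩ := ‹Nonempty R›; hρ.le.trans (hB _ hρC ⟨r, 0, hK r⟩)
  refine ⟨max 1 (Real.log B / c), by positivity,
    fun x d s φ hint hx hnonneg hone _ _ hae t ht r k hk => ?_⟩
  have hsol : IsFluidSolution K link abar C x d s φ := by
    refine ⟨hint, hx, fun t ht p => hnonneg t ht _ _ p.2.2, ?_⟩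
    filter_upwards [hae] with t h ht
    obtain ⟨⟨hs, hpos, hle⟩, ⟨hφ, hsum, hshare⟩, hdrift⟩ := h ht
    have hfair := (isPropFair_iff_sum_filter_pos (qOf_nonneg (hnonneg t ht))).2 ⟨hs, hpos, hle⟩
    exact ⟨fun p => hnonneg t ht _ _ p.2.2, hfair, fun j r => (hφ j r).1, funext hsum, hshare,
      hdrift⟩
  have hct : Real.log B * ∑ p, classState K link (x 0) p ≤ c * t := by
    rw [sum_routeClass fun r k => x 0 (link r k) r, hone, mul_one]
    exact (div_le_iff₀' hc0).1 ((le_max_right _ _).trans ht)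
  have hzero := hsol.classState_eq_zero habar_pos hC_nonneg hC_convex hlink_inj hregion hB1 hB hρ
    hρC hc (zero_le_one.trans ((le_max_left _ _).trans ht)) hct
  exact congrFun hzero ⟨r, k, hk⟩
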